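/- arXiv:1806.02459 — 5 statements merged into one kernel-verified Lean document; each statement's English description precedes it below -/
import Mathlib

section
/- Let G be a connected simple undirected graph on n vertices with graph Laplacian L, let ε ∈ ℝ, and let Ā = I_n − εL. If the geodesic distance between vertices i and j equals v ≥ 1, then the (i,j) entry of Ā^v equals ε^v times the number of paths of length v in G from i to j; in particular, if ε > 0 then this entry is strictly positive. -/
open Matrix

/-!
Write `Ā = D + ε A` with `A` the adjacency matrix and `D` the diagonal matrix with entries
`1 - ε deg`. In the expansion of `Ā ^ v`, a term that uses `D` at least once contributes to the
`(i, j)` entry only through walks from `i` to `j` of length less than `v`; there are none when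
`v ≤ dist i j`, so the entry is that of `ε ^ v A ^ v`, namely `ε ^ v` times the number of walks of
length `v` (`diagonal_add_smul_adjMatrix_pow_apply`). When `v = dist i j` these walks are geodesics,
hence paths, and at least one exists by connectedness.
-/

/-- Walks from `i` to `j` shorter than the distance do not exist. -/
lemma adjMatrix_pow_apply_eq_zero_of_lt_dist {V : Type*} [Fintype V] [DecidableEq V]
    (G : SimpleGraph V) [DecidableRel G.Adj] {i j : V} {v : ℕ} (h : v < G.dist i j) :
    (G.adjMatrix ℝ ^ v) i j = 0 := by
  rw [SimpleGraph.adjMatrix_pow_apply_eq_card_walk, Nat.cast_eq_zero, Fintype.card_eq_zero_iff]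
  refine ⟨fun p => ?_⟩
  have h₁ := SimpleGraph.dist_le p.1
  have h₂ : p.1.length = v := p.2
  omega

/-- Up to the power `dist i j`, the diagonal part of `D + ε A` does not contribute to the
`(i, j)` entry. -/
lemma diagonal_add_smul_adjMatrix_pow_apply {V : Type*} [Fintype V] [DecidableEq V]
    (G : SimpleGraph V) [DecidableRel G.Adj] (hG : G.Connected) (ε : ℝ) (d : V → ℝ) (j : V)
    (v : ℕ) (i : V) (h : v ≤ G.dist i j) :
    ((diagonal d + ε • G.adjMatrix ℝ) ^ v) i j = ε ^ v * (G.adjMatrix ℝ ^ v) i j := by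
  induction v generalizing i with
  | zero => simp
  | succ v ih =>
    rw [pow_succ', add_mul, Matrix.add_apply, diagonal_mul, ih i (by omega),
      adjMatrix_pow_apply_eq_zero_of_lt_dist G (by omega), smul_mul_assoc, Matrix.smul_apply,
      SimpleGraph.adjMatrix_mul_apply, pow_succ' (G.adjMatrix ℝ), SimpleGraph.adjMatrix_mul_apply,
      mul_zero, mul_zero, zero_add, smul_eq_mul, pow_succ', mul_assoc, Finset.mul_sum _ _ (ε ^ v)]
    congr 1
    refine Finset.sum_congr rfl fun k hk => ih k ?_
    -- A neighbour of `i` is at most one step closer to `j` than `i` is.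
    have h₁ : G.dist i j ≤ G.dist i k + G.dist k j := hG.dist_triangle
    have h₂ : G.dist i k = 1 := SimpleGraph.dist_eq_one_iff_adj.2 (by simpa using hk)
    omega

/-- Let `G` be a connected simple undirected graph on `n` vertices with
graph Laplacian `L`, let `ε ∈ ℝ`, and let `Ā = I_n − εL`.  If the geodesic distance between
vertices `i` and `j` equals `v ≥ 1`, then the `(i,j)` entry of `Ā^v` equals `ε^v` times the
number of paths of length `v` in `G` from `i` to `j`; in particular, if `ε > 0` then this
entry is strictly positive. -/
theorem consensus_matrix_pow_at_dist_eq_path_count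
    (n : ℕ) (G : SimpleGraph (Fin n)) [DecidableRel G.Adj] (hG : G.Connected) (ε : ℝ)
    (L : Matrix (Fin n) (Fin n) ℝ)
    (hL : ∀ i j, L i j =
      if i = j then (G.degree i : ℝ) else if G.Adj i j then -1 else 0)
    (Abar : Matrix (Fin n) (Fin n) ℝ) (hA : Abar = 1 - ε • L)
    (i j : Fin n) (v : ℕ) (hv : 1 ≤ v) (hdist : G.dist i j = v) :
    (Abar ^ v) i j =
      ε ^ v * (Nat.card {p : G.Walk i j // p.length = v ∧ p.IsPath} : ℝ) ∧
      (0 < ε → 0 < (Abar ^ v) i j) := by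
  have hA' : Abar = diagonal (fun k => 1 - ε * G.degree k) + ε • G.adjMatrix ℝ := by
    subst hA
    ext a b
    by_cases hab : a = b
    · subst hab
      simp [hL]
    · by_cases hadj : G.Adj a b <;> simp [hL, hab, hadj]
  -- A walk whose length equals the distance is a geodesic, so it is a path.
  have hcard : Nat.card {p : G.Walk i j // p.length = v ∧ p.IsPath} =
      Fintype.card {p : G.Walk i j | p.length = v} := by
    rw [← Nat.card_eq_fintype_card]
    refine Nat.card_congr (Equiv.subtypeEquivRight fun p => ?_)
    exact ⟨fun h => h.1, fun h =>
      ⟨h, SimpleGraph.Walk.isPath_of_length_eq_dist p (Eq.trans h hdist.symm)⟩⟩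
  have key : (Abar ^ v) i j =
      ε ^ v * (Nat.card {p : G.Walk i j // p.length = v ∧ p.IsPath} : ℝ) := by
    rw [hA', diagonal_add_smul_adjMatrix_pow_apply G hG ε _ j v i hdist.ge, hcard,
      SimpleGraph.adjMatrix_pow_apply_eq_card_walk]
  refine ⟨key, fun hε => ?_⟩
  obtain ⟨p, hp⟩ := hG.exists_walk_length_eq_dist i j
  have hpos : 0 < Fintype.card {p : G.Walk i j | p.length = v} :=
    Fintype.card_pos_iff.2 ⟨⟨p, hp.trans hdist⟩⟩
  rw [key, hcard]
  exact mul_pos (pow_pos hε v) (Nat.cast_pos.2 hpos)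
end

section
/- (Fault detectability index equals geodesic distance.) Let G be a connected simple undirected graph on n vertices with maximum degree Δ, let L be its graph Laplacian, let 0 < ε ≤ 1/Δ, and let A = I_{2n} − ε(L ⊗ I₂). Fix an observer vertex o and a faulty vertex i* with i* ≠ o, let F_{i*} = e_{i*} ⊗ I₂ ∈ ℝ^{2n×2} be the fault distribution matrix, and let C_o ∈ ℝ^{2m_o×2n} be the observer's measurement matrix whose block row associated with each neighbor j of o is (e_o − e_j)^T ⊗ I₂. Then the fault detectability index ρ_{i*} = min{ v ≥ 1 : C_o A^{v−1} F_{i*} ≠ 0 } equals the geodesic distance g_{o,i*} between o and i* in G. -/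
/-!
Write `A = P ⊗ I₂` with `P = I - ε L`. Off the diagonal, `P` is positive exactly on the edges
of `G`, so `P ^ k` sees nothing beyond distance `k`, and at distance exactly `k` its entry is
positive: only the shortest walks contribute, and these never use the diagonal
(`pow_apply_of_le_dist`). The block of `C_o A ^ k F` belonging to a neighbour `j` of `o` is
`((P ^ k) o i* - (P ^ k) j i*) I₂`. With `d = dist o i*`, all neighbours of `o` are at distance
at least `d - 1` from `i*`, so this vanishes for `k < d - 1`. For `k = d - 1` the first term
vanishes, whereas the second is positive when `j` is the next vertex on a geodesic from `o`
to `i*`.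
-/

open Matrix Kronecker

/-- A connected graph has a geodesic leaving `x` through a neighbour one step closer to `t`. -/
lemma exists_adj_dist_eq {V : Type*} {G : SimpleGraph V} (hG : G.Connected) {x t : V} {k : ℕ}
    (h : G.dist x t = k + 1) : ∃ y, G.Adj x y ∧ G.dist y t = k := by
  obtain ⟨p, hp⟩ := hG.exists_walk_length_eq_dist x t
  cases p with
  | nil => simp at h
  | @cons _ y _ hxy q =>
    refine ⟨y, hxy, ?_⟩
    have h1 : G.dist y t ≤ q.length := SimpleGraph.dist_le q
    have h2 : G.dist x t ≤ G.dist x y + G.dist y t := hG.dist_triangle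
    have h3 : G.dist x y = 1 := SimpleGraph.dist_eq_one_iff_adj.mpr hxy
    simp only [SimpleGraph.Walk.length_cons] at hp
    omega

lemma dist_le_succ_of_adj {V : Type*} {G : SimpleGraph V} (hG : G.Connected) {x y : V} (t : V)
    (h : G.Adj x y) : G.dist x t ≤ G.dist y t + 1 := by
  have h2 : G.dist x t ≤ G.dist x y + G.dist y t := hG.dist_triangle
  have h3 : G.dist x y = 1 := SimpleGraph.dist_eq_one_iff_adj.mpr h
  omega

/-- Powers of a matrix whose off-diagonal part is positive on the edges and zero elsewhere.
The diagonal is arbitrary: it plays no role as long as `k ≤ dist x t`. -/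
lemma pow_apply_of_le_dist {V : Type*} [Fintype V] [DecidableEq V] {G : SimpleGraph V}
    (hG : G.Connected) (M : Matrix V V ℝ)
    (hpos : ∀ x y, G.Adj x y → 0 < M x y) (hzero : ∀ x y, x ≠ y → ¬ G.Adj x y → M x y = 0)
    (t : V) (k : ℕ) : ∀ x, (k < G.dist x t → (M ^ k) x t = 0) ∧
      (G.dist x t = k → 0 < (M ^ k) x t) := by
  induction k with
  | zero =>
    intro x
    refine ⟨fun h => ?_, fun h => ?_⟩
    · have hx : x ≠ t := by
        rintro rfl
        simp at h
      simp [hx]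
    · have hx : x = t := hG.dist_eq_zero_iff.mp h
      simp [hx]
  | succ k ih =>
    intro x
    simp only [pow_succ', Matrix.mul_apply]
    refine ⟨fun h => Finset.sum_eq_zero fun y _ => ?_, fun h => ?_⟩
    · by_cases hxy : x = y
      · subst hxy
        rw [(ih x).1 (by omega), mul_zero]
      · by_cases ha : G.Adj x y
        · have := dist_le_succ_of_adj hG t ha
          rw [(ih y).1 (by omega), mul_zero]
        · rw [hzero x y hxy ha, zero_mul]
    · obtain ⟨z, hxz, hz⟩ := exists_adj_dist_eq hG h
      refine Finset.sum_pos' (fun y _ => ?_)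
        ⟨z, Finset.mem_univ z, mul_pos (hpos x z hxz) ((ih z).2 hz)⟩
      by_cases hxy : x = y
      · subst hxy
        rw [(ih x).1 (by omega), mul_zero]
      · by_cases ha : G.Adj x y
        · have := dist_le_succ_of_adj hG t ha
          rcases Nat.lt_or_ge k (G.dist y t) with hk | hk
          · rw [(ih y).1 hk, mul_zero]
          · exact (mul_pos (hpos x y ha) ((ih y).2 (by omega))).le
        · rw [hzero x y hxy ha, zero_mul]

lemma kronecker_one_pow {V W : Type*} [Fintype V] [DecidableEq V] [Fintype W] [DecidableEq W]
    (M : Matrix V V ℝ) (k : ℕ) :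
    (M ⊗ₖ (1 : Matrix W W ℝ)) ^ k = (M ^ k) ⊗ₖ (1 : Matrix W W ℝ) := by
  induction k with
  | zero => simp
  | succ k ih => rw [pow_succ, ih, ← Matrix.mul_kronecker_mul, pow_succ, one_mul]

/-- **Fault detectability index equals geodesic distance.**
Let `G` be a connected simple undirected graph on `n` vertices with maximum degree `Δ`,
let `L` be its graph Laplacian, let `0 < ε ≤ 1/Δ`, and let `A = I_{2n} − ε(L ⊗ I₂)`.
Fix an observer vertex `o` and a faulty vertex `i*` with `i* ≠ o`, let
`F_{i*} = e_{i*} ⊗ I₂` be the fault distribution matrix, and let `C_o` be the observer's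
measurement matrix whose block row associated with each neighbor `j` of `o` is
`(e_o − e_j)ᵀ ⊗ I₂`.  Then the fault detectability index
`ρ_{i*} = min { v ≥ 1 : C_o A^{v−1} F_{i*} ≠ 0 }` equals the geodesic distance `g_{o,i*}`. -/
theorem fault_detectability_index_eq_geodesic_distance
    (n : ℕ) (G : SimpleGraph (Fin n)) [DecidableRel G.Adj] (hG : G.Connected)
    (ε : ℝ) (hε0 : 0 < ε) (hε1 : ε ≤ 1 / (G.maxDegree : ℝ))
    (L : Matrix (Fin n) (Fin n) ℝ)
    (hL : ∀ i j, L i j =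
      if i = j then (G.degree i : ℝ) else if G.Adj i j then -1 else 0)
    (A : Matrix (Fin n × Fin 2) (Fin n × Fin 2) ℝ)
    (hA : A = 1 - ε • (L ⊗ₖ (1 : Matrix (Fin 2) (Fin 2) ℝ)))
    (o istar : Fin n) (hne : istar ≠ o)
    (F : Matrix (Fin n × Fin 2) (Fin 2) ℝ)
    (hF : ∀ p b, F p b = (if p.1 = istar then (1 : ℝ) else 0) *
      (if p.2 = b then 1 else 0))
    (C : Matrix ({j // j ∈ G.neighborFinset o} × Fin 2) (Fin n × Fin 2) ℝ)
    (hC : ∀ p q, C p q =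
      ((if q.1 = o then (1 : ℝ) else 0) - (if q.1 = (p.1 : Fin n) then 1 else 0)) *
      (if p.2 = q.2 then 1 else 0)) :
    sInf {v : ℕ | 1 ≤ v ∧ C * A ^ (v - 1) * F ≠ 0} = G.dist o istar := by
  have hAP : A = (1 - ε • L) ⊗ₖ (1 : Matrix (Fin 2) (Fin 2) ℝ) := by
    ext p q
    simp only [hA, Matrix.sub_apply, Matrix.smul_apply, Matrix.kroneckerMap_apply, smul_eq_mul,
      Matrix.one_apply, Prod.ext_iff]
    split_ifs <;> simp_all
  have key := pow_apply_of_le_dist hG (1 - ε • L)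
    (fun x y h => by simp [hL, h.ne, h, hε0])
    (fun x y hxy h => by simp [hL, hxy, h]) istar
  have entry : ∀ (k : ℕ) (p : {j // j ∈ G.neighborFinset o} × Fin 2) (b : Fin 2),
      (C * A ^ k * F) p b =
        (((1 - ε • L) ^ k) o istar - ((1 - ε • L) ^ k) p.1 istar) *
          (if p.2 = b then 1 else 0) := by
    intro k p b
    rw [hAP, kronecker_one_pow, Matrix.mul_assoc]
    have hPF : ∀ q : Fin n × Fin 2,
        (((1 - ε • L) ^ k) ⊗ₖ (1 : Matrix (Fin 2) (Fin 2) ℝ) * F :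
          Matrix (Fin n × Fin 2) (Fin 2) ℝ) q b =
        ((1 - ε • L) ^ k) q.1 istar * (if q.2 = b then 1 else 0) := by
      intro q
      simp [Matrix.mul_apply, hF, Fintype.sum_prod_type, Matrix.one_apply]
    rw [Matrix.mul_apply]
    simp only [hPF, hC, Fintype.sum_prod_type]
    simp [sub_mul, Finset.sum_sub_distrib]
  obtain ⟨d, hd⟩ : ∃ d, G.dist o istar = d + 1 :=
    Nat.exists_eq_succ_of_ne_zero fun h => hne (hG.dist_eq_zero_iff.mp h).symm
  rw [hd]
  refine IsLeast.csInf_eq ⟨⟨by omega, fun h0 => ?_⟩, ?_⟩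
  · obtain ⟨j, hoj, hj⟩ := exists_adj_dist_eq hG hd
    have h1 := entry d (⟨j, by simpa using hoj⟩, 0) 0
    rw [Nat.add_sub_cancel] at h0
    rw [h0, (key d o).1 (by omega)] at h1
    have h2 := (key d j).2 hj
    simp only [Matrix.zero_apply, if_true] at h1
    linarith
  · rintro v ⟨hv, hne0⟩
    by_contra hlt
    refine hne0 (Matrix.ext fun p b => ?_)
    have hadj : G.Adj o p.1 := (G.mem_neighborFinset _ _).mp p.1.2
    have := dist_le_succ_of_adj hG istar hadj
    rw [entry, (key (v - 1) o).1 (by omega), (key (v - 1) p.1).1 (by omega)]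
    simp
end

section
/- (Existence of a finite fault detectability index.) Let G be a connected simple undirected graph on n ≥ 2 vertices with maximum degree Δ, let L be its graph Laplacian, let 0 < ε ≤ 1/Δ, and let A = I_{2n} − ε(L ⊗ I₂). Then for every choice of observer vertex o and faulty vertex i* (including i* = o), the set { v ≥ 1 : C_o A^{v−1} F_{i*} ≠ 0 } is nonempty, where F_{i*} = e_{i*} ⊗ I₂ and C_o is the observer's measurement matrix whose block row associated with each neighbor j of o is (e_o − e_j)^T ⊗ I₂. -/
open Matrix Kronecker

/-!
Since `A` acts as `1 - ε L` on each of the two coordinates, the first coordinate of the fault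
response is the trajectory `x` of the scalar consensus dynamics
`x (k+1) u = x k u - ε ∑ v ∈ N(u), (x k u - x k v)` started at the indicator of `i*`, and the
entries of `C * A ^ k * F` in that coordinate are the differences `x k o - x k j`, `j ∈ N(o)`.
If all of these vanished, the dynamics would leave `x k o` constant in `k`.

* If `i* = o`, then `x 0` already separates `o` from any of its neighbors
  (there is one by connectedness and `n ≥ 2`).
* If `i* ≠ o`, then `x k o = x 0 o = 0` for all `k`. But `ε Δ ≤ 1` makes the update a nonnegative
  combination, with weight `ε > 0` on each neighbor, so mass spreads along a walk from `o` to `i*`: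
  `x k o > 0` where `k` is the length of that walk.
-/

section Consensus

variable {V : Type*} [Fintype V] (G : SimpleGraph V) [DecidableRel G.Adj]

/-- One consensus step as a nonnegative combination: it keeps nonnegative states nonnegative, and
a positive value at a neighbor makes the new value positive. -/
lemma consensus_step {ε : ℝ} (hε0 : 0 < ε) (hε : ∀ u, ε * (G.degree u : ℝ) ≤ 1)
    {y : V → ℝ} (hy : ∀ u, 0 ≤ y u) (u : V) :
    0 ≤ y u - ε * ∑ v ∈ G.neighborFinset u, (y u - y v) ∧
      ∀ w, G.Adj u w → 0 < y w → 0 < y u - ε * ∑ v ∈ G.neighborFinset u, (y u - y v) := by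
  have e : y u - ε * ∑ v ∈ G.neighborFinset u, (y u - y v) =
      (1 - ε * G.degree u) * y u + ε * ∑ v ∈ G.neighborFinset u, y v := by
    rw [Finset.sum_sub_distrib, Finset.sum_const, G.card_neighborFinset_eq_degree, nsmul_eq_mul]
    ring
  rw [e]
  have h1 : 0 ≤ (1 - ε * G.degree u) * y u := mul_nonneg (by linarith [hε u]) (hy u)
  refine ⟨add_nonneg h1 (mul_nonneg hε0.le (Finset.sum_nonneg fun v _ => hy v)), ?_⟩
  intro w hw hpos
  have h2 : 0 < ∑ v ∈ G.neighborFinset u, y v :=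
    Finset.sum_pos' (fun v _ => hy v) ⟨w, by simpa using hw, hpos⟩
  exact add_pos_of_nonneg_of_pos h1 (mul_pos hε0 h2)

/-- A consensus trajectory started at a vertex indicator disagrees, at some time, between `o` and
one of its neighbors. -/
lemma exists_neighbor_ne [DecidableEq V] [Nontrivial V] (hG : G.Connected) {ε : ℝ} (hε0 : 0 < ε)
    (hε : ∀ u, ε * (G.degree u : ℝ) ≤ 1) (o i : V) (x : ℕ → V → ℝ)
    (h0 : ∀ u, x 0 u = if u = i then 1 else 0)
    (hx : ∀ k u, x (k + 1) u = x k u - ε * ∑ v ∈ G.neighborFinset u, (x k u - x k v)) :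
    ∃ k, ∃ j ∈ G.neighborFinset o, x k o - x k j ≠ 0 := by
  by_contra! hcon
  have hconst : ∀ k, x k o = x 0 o := by
    intro k
    induction k with
    | zero => rfl
    | succ k ih => rw [hx, Finset.sum_eq_zero (hcon k), ih]; ring
  have hnn : ∀ k u, 0 ≤ x k u := by
    intro k
    induction k with
    | zero => intro u; rw [h0]; split_ifs <;> norm_num
    | succ k ih => intro u; rw [hx]; exact (consensus_step G hε0 hε ih u).1
  have hwalk : ∀ {u w : V} (p : G.Walk u w), w = i → 0 < x p.length u := by
    intro u w p
    induction p with
    | nil => intro h; simp [h0, h]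
    | cons hadj q ih =>
      intro h
      rw [SimpleGraph.Walk.length_cons, hx]
      exact (consensus_step G hε0 hε (hnn _) _).2 _ hadj (ih h)
  by_cases hoi : o = i
  · obtain ⟨j, hj⟩ := hG.preconnected.exists_adj_of_nontrivial o
    have h := hcon 0 j (by simpa using hj)
    have hji : j ≠ i := fun h => hj.ne (hoi.trans h.symm)
    simp [h0, hoi, hji] at h
  · obtain ⟨p⟩ := hG.preconnected o i
    have h := hwalk p rfl
    rw [hconst, h0, if_neg hoi] at h
    exact lt_irrefl _ h

end Consensus

/-- **Existence of a finite fault detectability index.**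
Let `G` be a connected simple undirected graph on `n ≥ 2` vertices with maximum degree `Δ`,
let `L` be its graph Laplacian, let `0 < ε ≤ 1/Δ`, and let `A = I_{2n} − ε(L ⊗ I₂)`.
Then for every choice of observer vertex `o` and faulty vertex `i*` (including `i* = o`),
the set `{ v ≥ 1 : C_o A^{v−1} F_{i*} ≠ 0 }` is nonempty, where `F_{i*} = e_{i*} ⊗ I₂` and
`C_o` is the observer's measurement matrix whose block row associated with each neighbor
`j` of `o` is `(e_o − e_j)ᵀ ⊗ I₂`. -/
theorem fault_detectability_index_exists
    (n : ℕ) (hn : 2 ≤ n) (G : SimpleGraph (Fin n)) [DecidableRel G.Adj] (hG : G.Connected)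
    (ε : ℝ) (hε0 : 0 < ε) (hε1 : ε ≤ 1 / (G.maxDegree : ℝ))
    (L : Matrix (Fin n) (Fin n) ℝ)
    (hL : ∀ i j, L i j =
      if i = j then (G.degree i : ℝ) else if G.Adj i j then -1 else 0)
    (A : Matrix (Fin n × Fin 2) (Fin n × Fin 2) ℝ)
    (hA : A = 1 - ε • (L ⊗ₖ (1 : Matrix (Fin 2) (Fin 2) ℝ)))
    (o istar : Fin n)
    (F : Matrix (Fin n × Fin 2) (Fin 2) ℝ)
    (hF : ∀ p b, F p b = (if p.1 = istar then (1 : ℝ) else 0) *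
      (if p.2 = b then 1 else 0))
    (C : Matrix ({j // j ∈ G.neighborFinset o} × Fin 2) (Fin n × Fin 2) ℝ)
    (hC : ∀ p q, C p q =
      ((if q.1 = o then (1 : ℝ) else 0) - (if q.1 = (p.1 : Fin n) then 1 else 0)) *
      (if p.2 = q.2 then 1 else 0)) :
    {v : ℕ | 1 ≤ v ∧ C * A ^ (v - 1) * F ≠ 0}.Nonempty := by
  have hΔ : (0 : ℝ) < G.maxDegree := by
    -- for maximal degree `0` the bound would read `ε ≤ 1 / 0 = 0`
    rcases Nat.eq_zero_or_pos G.maxDegree with h | h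
    · rw [h] at hε1; norm_num at hε1; linarith
    · exact_mod_cast h
  have hε : ∀ u, ε * (G.degree u : ℝ) ≤ 1 := by
    intro u
    have h1 : (G.degree u : ℝ) ≤ G.maxDegree := by exact_mod_cast G.degree_le_maxDegree u
    calc ε * (G.degree u : ℝ) ≤ ε * G.maxDegree := by gcongr
      _ ≤ 1 := (le_div_iff₀ hΔ).1 hε1
  have hLsum : ∀ (y : Fin n → ℝ) u,
      ∑ v, L u v * y v = ∑ v ∈ G.neighborFinset u, (y u - y v) := by
    intro y u
    have e : ∀ v, L u v * y v =
        (if u = v then (G.degree u : ℝ) * y v else 0) - (if G.Adj u v then y v else 0) := by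
      intro v
      rw [hL]
      by_cases h : u = v
      · subst h; simp
      · by_cases h' : G.Adj u v <;> simp [h, h']
    simp_rw [e]
    rw [Finset.sum_sub_distrib, Finset.sum_sub_distrib, Finset.sum_const,
      G.card_neighborFinset_eq_degree, nsmul_eq_mul, Finset.sum_ite_eq, ← Finset.sum_filter,
      SimpleGraph.neighborFinset_eq_filter]
    simp
  have : Nontrivial (Fin n) := Fin.nontrivial_iff_two_le.2 hn
  obtain ⟨k, j, hj, hne⟩ := exists_neighbor_ne G hG hε0 hε o istar
    (fun k u => (A ^ k * F) (u, 0) 0) (fun u => by simp [hF]) (fun k u => by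
      rw [← hLsum (fun u => (A ^ k * F) (u, 0) 0), pow_succ', Matrix.mul_assoc, hA,
        Matrix.sub_mul, Matrix.one_mul, Matrix.smul_mul, ← hA, Matrix.sub_apply,
        Matrix.smul_apply, smul_eq_mul, Matrix.mul_apply (M := L ⊗ₖ _), Fintype.sum_prod_type]
      simp [Matrix.one_apply])
  refine ⟨k + 1, by omega, fun h => hne ?_⟩
  have h2 := congrFun (congrFun h (⟨j, hj⟩, 0)) 0
  rw [Nat.add_sub_cancel, Matrix.mul_assoc, Matrix.mul_apply, Fintype.sum_prod_type] at h2
  simpa [hC, sub_mul, Finset.sum_sub_distrib] using h2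
end

section
/- Let A ∈ ℝ^{N×N}, C ∈ ℝ^{p×N}, F ∈ ℝ^{N×q}, K ∈ ℝ^{N×p}, and let ρ ≥ 1 be such that C A^j F = 0 for all 0 ≤ j ≤ ρ − 2. Then (A − K C)^τ F = A^τ F for all 0 ≤ τ ≤ ρ − 1. -/
open Matrix

/-- Let `A ∈ ℝ^{N×N}`, `C ∈ ℝ^{p×N}`, `F ∈ ℝ^{N×q}`, `K ∈ ℝ^{N×p}`, and let
`ρ ≥ 1` be such that `C A^j F = 0` for all `0 ≤ j ≤ ρ − 2`.  Then
`(A − K C)^τ F = A^τ F` for all `0 ≤ τ ≤ ρ − 1`. -/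
theorem observer_pow_mul_fault_eq_pow_mul_fault
    (N p q : ℕ)
    (A : Matrix (Fin N) (Fin N) ℝ) (C : Matrix (Fin p) (Fin N) ℝ)
    (F : Matrix (Fin N) (Fin q) ℝ) (K : Matrix (Fin N) (Fin p) ℝ)
    (ρ : ℕ) (hρ : 1 ≤ ρ)
    (hdetect : ∀ j, j + 2 ≤ ρ → C * A ^ j * F = 0) :
    ∀ τ, τ ≤ ρ - 1 → (A - K * C) ^ τ * F = A ^ τ * F := by
  intro τ
  induction τ with
  | zero => intro _; simp
  | succ t ih =>
    intro ht
    -- The output-injection term vanishes: `C * A ^ t * F = 0`, since `t + 2 ≤ ρ`.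
    have hC : C * (A ^ t * F) = 0 := by
      rw [← Matrix.mul_assoc]
      exact hdetect t (by omega)
    rw [pow_succ', Matrix.mul_assoc, ih (by omega), Matrix.sub_mul, Matrix.mul_assoc K, hC,
      Matrix.mul_zero, sub_zero, ← Matrix.mul_assoc, ← pow_succ']
end

section
/- (Directional residual decomposition.) Let A ∈ ℝ^{N×N}, C ∈ ℝ^{p×N}, F ∈ ℝ^{N×q}, let ε > 0, let ρ ≥ 1 satisfy C A^j F = 0 for all 0 ≤ j ≤ ρ − 2, set Ψ = ε A^{ρ−1} F and D = CΨ, and let K ∈ ℝ^{N×p} satisfy (A − K C)Ψ = 0. Fix a fault vector δ ∈ ℝ^q, a fault time k_d ∈ ℕ, and sequences e, ē : ℕ → ℝ^N with the same initial value e(0) = ē(0), satisfying e(k+1) = (A − K C)e(k) + εFδ for k ≥ k_d and e(k+1) = (A − K C)e(k) for k < k_d, while ē(k+1) = (A − K C)ē(k) for all k. Then the residuals q(k) = C e(k) and q̄(k) = C ē(k) satisfy q(k) = q̄(k) for all k < k_d + ρ, and q(k) = q̄(k) + Dδ for all k ≥ k_d + ρ. -/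
/-!
Write `G = A - K C` and `x = e - ebar`. Until the fault time `x = 0`, and afterwards `x` is driven by the
constant input `εFδ`, so `x (kd + n) = ε ∑_{j < n} G ^ j F δ` (`error_difference`). Since `C A ^ j F = 0`
for `j ≤ ρ - 2`, the output injection is invisible along `F` up to the power `ρ - 1`, i.e.
`G ^ j F = A ^ j F` for `j < ρ` (`closedLoop_pow_mul`). Hence `ε C G ^ j F` vanishes for `j ≤ ρ - 2` and
equals `D` for `j = ρ - 1`; for `j ≥ ρ` it vanishes because `ε G ^ (ρ - 1) F = Ψ` is annihilated by `G`.
The residual difference `C x` is therefore `0` for `n < ρ` and `D δ` for `n ≥ ρ`.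
-/

open Matrix

theorem closedLoop_pow_mul {N p q : ℕ}
    {A : Matrix (Fin N) (Fin N) ℝ} {C : Matrix (Fin p) (Fin N) ℝ}
    {F : Matrix (Fin N) (Fin q) ℝ} {ρ : ℕ} (hdetect : ∀ j, j + 2 ≤ ρ → C * A ^ j * F = 0)
    (K : Matrix (Fin N) (Fin p) ℝ) (j : ℕ) (hj : j + 1 ≤ ρ) :
    (A - K * C) ^ j * F = A ^ j * F := by
  induction j with
  | zero => simp
  | succ j ih =>
    rw [pow_succ', Matrix.mul_assoc, ih (by omega), Matrix.sub_mul, Matrix.mul_assoc K C,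
      ← Matrix.mul_assoc C, hdetect j (by omega), Matrix.mul_zero, sub_zero, ← Matrix.mul_assoc,
      ← pow_succ']

/-- Variation of constants for the difference of a faulty and a fault-free trajectory that agree at
the fault time. -/
theorem error_difference {N q : ℕ} (G : Matrix (Fin N) (Fin N) ℝ) (F : Matrix (Fin N) (Fin q) ℝ)
    (ε : ℝ) (δ : Fin q → ℝ) (kd : ℕ) (e ebar : ℕ → Fin N → ℝ) (hkd : e kd = ebar kd)
    (he : ∀ k, kd ≤ k → e (k + 1) = G *ᵥ e k + ε • F *ᵥ δ)
    (hebar : ∀ k, ebar (k + 1) = G *ᵥ ebar k) (n : ℕ) :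
    e (kd + n) = ebar (kd + n) + (∑ j ∈ Finset.range n, ε • (G ^ j * F)) *ᵥ δ := by
  induction n with
  | zero => simp [hkd]
  | succ n ih =>
    have hS : ∑ j ∈ Finset.range (n + 1), ε • (G ^ j * F)
        = G * (∑ j ∈ Finset.range n, ε • (G ^ j * F)) + ε • F := by
      rw [Finset.sum_range_succ', Matrix.mul_sum]
      simp [pow_succ', Matrix.mul_assoc]
    rw [← add_assoc, he _ (by omega), hebar, ih, hS, Matrix.mulVec_add, Matrix.add_mulVec,
      Matrix.mulVec_mulVec, Matrix.smul_mulVec, add_assoc]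

/-- **Directional residual decomposition.**
Let `A ∈ ℝ^{N×N}`, `C ∈ ℝ^{p×N}`, `F ∈ ℝ^{N×q}`, let `ε > 0`, let `ρ ≥ 1` satisfy
`C A^j F = 0` for all `0 ≤ j ≤ ρ − 2`, set `Ψ = ε A^{ρ−1} F` and `D = CΨ`, and let `K`
satisfy `(A − K C)Ψ = 0`.  Fix a fault vector `δ`, a fault time `k_d`, and sequences
`e, ē : ℕ → ℝ^N` with `e(0) = ē(0)`, satisfying `e(k+1) = (A − K C)e(k) + εFδ` for
`k ≥ k_d` and `e(k+1) = (A − K C)e(k)` for `k < k_d`, while `ē(k+1) = (A − K C)ē(k)` for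
all `k`.  Then the residuals `q(k) = C e(k)` and `q̄(k) = C ē(k)` satisfy `q(k) = q̄(k)`
for all `k < k_d + ρ`, and `q(k) = q̄(k) + Dδ` for all `k ≥ k_d + ρ`. -/
theorem residual_directional_decomposition
    (N p q : ℕ)
    (A : Matrix (Fin N) (Fin N) ℝ) (C : Matrix (Fin p) (Fin N) ℝ)
    (F : Matrix (Fin N) (Fin q) ℝ) (ε : ℝ) (hε : 0 < ε)
    (ρ : ℕ) (hρ : 1 ≤ ρ)
    (hdetect : ∀ j, j + 2 ≤ ρ → C * A ^ j * F = 0)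
    (Ψ : Matrix (Fin N) (Fin q) ℝ) (hΨ : Ψ = ε • (A ^ (ρ - 1) * F))
    (D : Matrix (Fin p) (Fin q) ℝ) (hD : D = C * Ψ)
    (K : Matrix (Fin N) (Fin p) ℝ) (hK : (A - K * C) * Ψ = 0)
    (δ : Fin q → ℝ) (kd : ℕ)
    (e ebar : ℕ → Fin N → ℝ) (h0 : e 0 = ebar 0)
    (he_fault : ∀ k, kd ≤ k → e (k + 1) = (A - K * C).mulVec (e k) + ε • F.mulVec δ)
    (he_free : ∀ k, k < kd → e (k + 1) = (A - K * C).mulVec (e k))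
    (hebar : ∀ k, ebar (k + 1) = (A - K * C).mulVec (ebar k)) :
    (∀ k, k < kd + ρ → C.mulVec (e k) = C.mulVec (ebar k)) ∧
      (∀ k, kd + ρ ≤ k → C.mulVec (e k) = C.mulVec (ebar k) + D.mulVec δ) := by
  have hagree : ∀ k, k ≤ kd → e k = ebar k := by
    intro k
    induction k with
    | zero => exact fun _ => h0
    | succ k ih => intro hk; rw [he_free k hk, hebar, ih (by omega)]
  have hdiff := error_difference (A - K * C) F ε δ kd e ebar (hagree kd le_rfl) he_fault hebar
  -- The Markov parameters of the closed loop are zero except the one of index `ρ - 1`.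
  have hlow : ∀ j, j + 1 < ρ → C * (ε • ((A - K * C) ^ j * F)) = 0 := by
    intro j hj
    rw [closedLoop_pow_mul hdetect K j (by omega), Matrix.mul_smul, ← Matrix.mul_assoc,
      hdetect j (by omega), smul_zero]
  have hPsi : ε • ((A - K * C) ^ (ρ - 1) * F) = Ψ := by
    rw [closedLoop_pow_mul hdetect K _ (by omega), hΨ]
  have hhigh : ∀ j, ρ ≤ j → C * (ε • ((A - K * C) ^ j * F)) = 0 := by
    intro j hj
    obtain ⟨m, rfl⟩ : ∃ m, j = m + 1 + (ρ - 1) := ⟨j - ρ, by omega⟩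
    rw [pow_add, Matrix.mul_assoc, ← Matrix.mul_smul, hPsi, pow_succ, Matrix.mul_assoc, hK,
      Matrix.mul_zero, Matrix.mul_zero]
  refine ⟨fun k hk => ?_, fun k hk => ?_⟩
  · rcases le_total k kd with h | h
    · rw [hagree k h]
    · obtain ⟨n, rfl⟩ := Nat.exists_eq_add_of_le h
      rw [hdiff, Matrix.mulVec_add, Matrix.mulVec_mulVec, Matrix.mul_sum,
        Finset.sum_eq_zero fun j hj => hlow j (by have := Finset.mem_range.1 hj; omega),
        Matrix.zero_mulVec, add_zero]
  · obtain ⟨n, rfl⟩ := Nat.exists_eq_add_of_le (show kd ≤ k by omega)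
    have hsum : ∑ j ∈ Finset.range n, C * (ε • ((A - K * C) ^ j * F)) = D := by
      rw [Finset.sum_eq_single (ρ - 1), hPsi, hD]
      · intro j _ hj
        rcases lt_or_ge j ρ with h | h
        · exact hlow j (by omega)
        · exact hhigh j h
      · intro h
        exact absurd (Finset.mem_range.2 (by omega)) h
    rw [hdiff, Matrix.mulVec_add, Matrix.mulVec_mulVec, Matrix.mul_sum, hsum]
end
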